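/- (Weber–Schafheitlin-type triple Bessel integral) Let ρ₁, ρ₂, ρ₃ > 0 with |ρ₂ - ρ₃| < ρ₁ < ρ₂ + ρ₃, and let γ₃ ∈ (0,π) satisfy ρ₁² = ρ₂² + ρ₃² - 2ρ₂ρ₃cos γ₃. Then for every integer ℓ, ∫₀^∞ J₀(ρ₁λ) J_ℓ(ρ₂λ) J_ℓ(ρ₃λ) λ dλ = cos(ℓγ₃)/(πρ₂ρ₃ sin γ₃). -/

import Mathlib

open Real MeasureTheory Filter Topology Complex

/-- Bessel function of the first kind of integer order, via the standard
integral representation `J_n(x) = (1/π) ∫₀^π cos (n θ - x sin θ) dθ`. -/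
noncomputable def besselJ (n : ℤ) (x : ℝ) : ℝ :=
  (1 / Real.pi) * ∫ θ in (0:ℝ)..Real.pi, Real.cos (n * θ - x * Real.sin θ)

lemma wsJ_cont (n : ℤ) : Continuous (besselJ n) := by
  unfold besselJ
  refine continuous_const.mul ?_
  apply intervalIntegral.continuous_parametric_intervalIntegral_of_continuous'
  fun_prop

lemma wsJ_abs_le (n : ℤ) (x : ℝ) : |besselJ n x| ≤ 1 := by
  have h : ‖∫ θ in (0:ℝ)..Real.pi, Real.cos (n * θ - x * Real.sin θ)‖ ≤ 1 * |Real.pi - 0| := by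
    apply intervalIntegral.norm_integral_le_of_norm_le_const
    intro t _
    exact Real.abs_cos_le_one _
  have hp := Real.pi_pos
  rw [sub_zero, abs_of_pos hp, one_mul, Real.norm_eq_abs] at h
  unfold besselJ
  rw [abs_mul, abs_of_pos (by positivity)]
  rw [div_mul_eq_mul_div, one_mul, div_le_one hp]
  exact h

lemma wsJ0_eq (x : ℝ) : besselJ 0 x = (1 / Real.pi) * ∫ θ in (0:ℝ)..Real.pi,
    Real.cos (x * Real.sin θ) := by
  simp [besselJ]

lemma ws_refl (f : ℝ → ℝ) :
    ∫ θ in (0:ℝ)..Real.pi, Real.cos θ * f (Real.sin θ) = 0 := by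
  have h := intervalIntegral.integral_comp_sub_left (a := 0) (b := Real.pi)
    (fun θ => Real.cos θ * f (Real.sin θ)) Real.pi
  simp only [Real.cos_pi_sub, Real.sin_pi_sub, sub_self, sub_zero, neg_mul,
    intervalIntegral.integral_neg] at h
  linarith

lemma wsJ1_eq (x : ℝ) : besselJ 1 x = (1 / Real.pi) * ∫ θ in (0:ℝ)..Real.pi,
    Real.sin θ * Real.sin (x * Real.sin θ) := by
  unfold besselJ
  congr 1
  have h : ∀ θ : ℝ, Real.cos (((1:ℤ):ℝ) * θ - x * Real.sin θ) =
      Real.cos θ * Real.cos (x * Real.sin θ) + Real.sin θ * Real.sin (x * Real.sin θ) := by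
    intro θ
    rw [Int.cast_one, one_mul, Real.cos_sub]
  simp_rw [h]
  rw [intervalIntegral.integral_add (Continuous.intervalIntegrable (by fun_prop) _ _)
    (Continuous.intervalIntegrable (by fun_prop) _ _),
    ws_refl (fun s => Real.cos (x * s)), zero_add]

lemma ws_deriv_int {F F' : ℝ → ℝ → ℝ} (hF : ∀ x, Continuous (F x)) (hF' : ∀ x, Continuous (F' x))
    (hb : ∀ x t, |F' x t| ≤ 1) (hd : ∀ x t, HasDerivAt (fun x => F x t) (F' x t) x) (x : ℝ) :
    HasDerivAt (fun x => ∫ t in (0:ℝ)..Real.pi, F x t) (∫ t in (0:ℝ)..Real.pi, F' x t) x := by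
  refine (intervalIntegral.hasDerivAt_integral_of_dominated_loc_of_deriv_le (s := Set.univ)
    (bound := fun _ => 1) Filter.univ_mem ?_ ?_ ?_ ?_ ?_ ?_).2
  · exact Filter.Eventually.of_forall fun y => (hF y).aestronglyMeasurable
  · exact (hF x).intervalIntegrable _ _
  · exact (hF' x).aestronglyMeasurable
  · exact Filter.Eventually.of_forall fun t _ y _ => hb y t
  · exact continuous_const.intervalIntegrable _ _
  · exact Filter.Eventually.of_forall fun t _ y _ => hd y t

lemma wsJ0_deriv (x : ℝ) : HasDerivAt (besselJ 0) (-besselJ 1 x) x := by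
  have h := ws_deriv_int (F := fun x θ => Real.cos (x * Real.sin θ))
    (F' := fun x θ => -(Real.sin θ * Real.sin (x * Real.sin θ)))
    (by intro x; fun_prop) (by intro x; fun_prop)
    (by
      intro x t
      rw [abs_neg, abs_mul]
      exact mul_le_one₀ (Real.abs_sin_le_one _) (abs_nonneg _) (Real.abs_sin_le_one _))
    (by
      intro x t
      have := ((hasDerivAt_id x).mul_const (Real.sin t)).cos
      refine this.congr_deriv ?_
      simp only [id]
      ring) x
  have h2 := h.const_mul (1 / Real.pi)
  rw [intervalIntegral.integral_neg, mul_neg, ← wsJ1_eq] at h2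
  rw [show besselJ 0 = _ from funext wsJ0_eq]
  exact h2

lemma wsJ1_deriv (x : ℝ) : HasDerivAt (besselJ 1) ((1 / Real.pi) * ∫ θ in (0:ℝ)..Real.pi,
    Real.sin θ ^ 2 * Real.cos (x * Real.sin θ)) x := by
  have h := ws_deriv_int (F := fun x θ => Real.sin θ * Real.sin (x * Real.sin θ))
    (F' := fun x θ => Real.sin θ ^ 2 * Real.cos (x * Real.sin θ))
    (by intro x; fun_prop) (by intro x; fun_prop)
    (by
      intro x t
      rw [abs_mul]
      refine mul_le_one₀ ?_ (abs_nonneg _) (Real.abs_cos_le_one _)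
      rw [abs_pow]
      exact pow_le_one₀ (abs_nonneg _) (Real.abs_sin_le_one _))
    (by
      intro x t
      have := (((hasDerivAt_id x).mul_const (Real.sin t)).sin).const_mul (Real.sin t)
      refine this.congr_deriv ?_
      simp only [id]
      ring) x
  have h2 := h.const_mul (1 / Real.pi)
  rw [show besselJ 1 = _ from funext wsJ1_eq]
  exact h2

lemma wsJ1_eq2 (x : ℝ) : besselJ 1 x = x * ((1 / Real.pi) * ∫ θ in (0:ℝ)..Real.pi,
    Real.cos θ ^ 2 * Real.cos (x * Real.sin θ)) := by
  have h : ∫ θ in (0:ℝ)..Real.pi, (Real.sin θ * Real.sin (x * Real.sin θ)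
      - x * (Real.cos θ ^ 2 * Real.cos (x * Real.sin θ))) = 0 := by
    rw [intervalIntegral.integral_eq_sub_of_hasDerivAt
      (f := fun θ => -(Real.cos θ * Real.sin (x * Real.sin θ)))]
    · simp
    · intro t _
      have := ((Real.hasDerivAt_cos t).mul ((Real.hasDerivAt_sin t).const_mul x).sin).neg
      refine this.congr_deriv ?_
      ring
    · exact Continuous.intervalIntegrable (by fun_prop) _ _
  rw [intervalIntegral.integral_sub (Continuous.intervalIntegrable (by fun_prop) _ _)
    (Continuous.intervalIntegrable (by fun_prop) _ _), intervalIntegral.integral_const_mul] at h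
  rw [wsJ1_eq, sub_eq_zero.1 h]
  ring

lemma wsxJ1_deriv (x : ℝ) : HasDerivAt (fun x => x * besselJ 1 x) (x * besselJ 0 x) x := by
  have h := (hasDerivAt_id x).mul (wsJ1_deriv x)
  refine h.congr_deriv ?_
  simp only [id, one_mul]
  rw [wsJ1_eq2, wsJ0_eq, ← mul_add, ← mul_add, ← intervalIntegral.integral_add
    (Continuous.intervalIntegrable (by fun_prop) _ _)
    (Continuous.intervalIntegrable (by fun_prop) _ _)]
  congr 3
  funext θ
  have := Real.sin_sq_add_cos_sq θ
  rw [← add_mul, add_comm, this, one_mul]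

lemma wsJ1_deriv' {x : ℝ} (hx : x ≠ 0) :
    HasDerivAt (besselJ 1) (besselJ 0 x - besselJ 1 x / x) x := by
  have h1 := (wsJ1_deriv x)
  have h := (hasDerivAt_id x).mul h1
  have h3 := h.unique (wsxJ1_deriv x)
  simp only [id, one_mul] at h3
  refine h1.congr_deriv ?_
  field_simp at h3 ⊢
  linarith

lemma wsJ_energy {x : ℝ} (hx : 0 ≤ x) : x * (besselJ 0 x ^ 2 + besselJ 1 x ^ 2) ≤ 5 := by
  have hb0 : ∀ x, besselJ 0 x ^ 2 ≤ 1 := fun x => (sq_le_one_iff_abs_le_one _).2 (wsJ_abs_le 0 x)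
  have hb1 : ∀ x, besselJ 1 x ^ 2 ≤ 1 := fun x => (sq_le_one_iff_abs_le_one _).2 (wsJ_abs_le 1 x)
  rcases le_total x 1 with h1 | h1
  · nlinarith [hb0 x, hb1 x, sq_nonneg (besselJ 0 x), sq_nonneg (besselJ 1 x)]
  · set W : ℝ → ℝ := fun x => x * (besselJ 0 x ^ 2 + besselJ 1 x ^ 2) - besselJ 0 x * besselJ 1 x
      + besselJ 0 x ^ 2 / (2 * x) with hW
    have hd : ∀ y : ℝ, 0 < y → HasDerivAt W (-(besselJ 0 y ^ 2 / (2 * y ^ 2))) y := by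
      intro y hy
      have e0 := wsJ0_deriv y
      have e1 := wsJ1_deriv' hy.ne'
      have := (((hasDerivAt_id y).mul ((e0.pow 2).add (e1.pow 2))).sub (e0.mul e1)).add
        ((e0.pow 2).div ((hasDerivAt_id y).const_mul 2) (by simp [hy.ne']))
      refine this.congr_deriv ?_
      simp
      field_simp
      ring
    have hanti : AntitoneOn W (Set.Ici 1) := by
      apply antitoneOn_of_deriv_nonpos (convex_Ici 1)
      · intro y hy
        exact (hd y (lt_of_lt_of_le one_pos hy)).continuousAt.continuousWithinAt
      · intro y hy
        rw [interior_Ici] at hy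
        exact (hd y (lt_trans one_pos hy)).differentiableAt.differentiableWithinAt
      · intro y hy
        rw [interior_Ici] at hy
        rw [(hd y (lt_trans one_pos hy)).deriv]
        have : 0 ≤ besselJ 0 y ^ 2 / (2 * y ^ 2) := by positivity
        linarith
    have h2 := hanti (Set.mem_Ici.2 le_rfl) (Set.mem_Ici.2 h1) h1
    simp only [hW] at h2
    have h3 : 0 ≤ besselJ 0 x ^ 2 / (2 * x) := by positivity
    nlinarith [hb0 x, hb1 x, hb0 1, hb1 1, sq_nonneg (besselJ 0 x - besselJ 1 x),
      sq_nonneg (besselJ 0 1 + besselJ 1 1)]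

lemma ws_swap {F : ℝ → ℝ → ℝ} (hF : Continuous F.uncurry) (a b c d : ℝ) :
    ∫ x in a..b, ∫ y in c..d, F x y = ∫ y in c..d, ∫ x in a..b, F x y := by
  apply intervalIntegral_intervalIntegral_swap
  have : IntegrableOn F.uncurry (Set.uIcc a b ×ˢ Set.uIcc c d) :=
    hF.continuousOn.integrableOn_compact (isCompact_uIcc.prod isCompact_uIcc)
  exact this.mono_set (Set.prod_mono Set.uIoc_subset_uIcc Set.uIoc_subset_uIcc)

lemma ws_fold {f : ℝ → ℝ} (hf : Continuous f) (h : ∀ t, f (2 * Real.pi - t) = f t) :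
    ∫ t in (0:ℝ)..2 * Real.pi, f t = 2 * ∫ t in (0:ℝ)..Real.pi, f t := by
  have h1 := intervalIntegral.integral_comp_sub_left (a := 0) (b := Real.pi) f (2 * Real.pi)
  simp_rw [h] at h1
  rw [show 2 * Real.pi - Real.pi = Real.pi by ring, sub_zero] at h1
  rw [← intervalIntegral.integral_add_adjacent_intervals (hf.intervalIntegrable 0 Real.pi)
    (hf.intervalIntegrable Real.pi (2 * Real.pi)), ← h1]
  ring

lemma ws_fold_odd {f : ℝ → ℝ} (h : ∀ t, f (2 * Real.pi - t) = -f t) :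
    ∫ t in (0:ℝ)..2 * Real.pi, f t = 0 := by
  have h1 := intervalIntegral.integral_comp_sub_left (a := 0) (b := 2 * Real.pi) f (2 * Real.pi)
  simp_rw [h] at h1
  rw [sub_self, sub_zero, intervalIntegral.integral_neg] at h1
  linarith

lemma ws_phase (n : ℤ) (x t : ℝ) : (n : ℝ) * (2 * Real.pi - t) - x * Real.sin (2 * Real.pi - t) =
    n * (2 * Real.pi) - (n * t - x * Real.sin t) := by
  rw [Real.sin_two_pi_sub]; ring

lemma wsJ_full (n : ℤ) (x : ℝ) :
    ∫ t in (0:ℝ)..2 * Real.pi, Real.cos (n * t - x * Real.sin t) = 2 * Real.pi * besselJ n x := by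
  rw [ws_fold (by fun_prop)]
  · unfold besselJ
    field_simp
  · intro t
    rw [ws_phase, Real.cos_int_mul_two_pi_sub]

lemma wsJ_full_sin (n : ℤ) (x : ℝ) :
    ∫ t in (0:ℝ)..2 * Real.pi, Real.sin (n * t - x * Real.sin t) = 0 := by
  apply ws_fold_odd
  intro t
  rw [ws_phase, Real.sin_int_mul_two_pi_sub]

lemma ws_shift {f : ℝ → ℝ} (hf : Function.Periodic f (2 * Real.pi)) (s : ℝ) :
    ∫ t in (0:ℝ)..2 * Real.pi, f (s + t) = ∫ t in (0:ℝ)..2 * Real.pi, f t := by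
  rw [intervalIntegral.integral_comp_add_left (f := f), add_zero]
  have := hf.intervalIntegral_add_eq s 0
  rwa [zero_add] at this

/-- third side of a triangle -/
noncomputable def wsR (p q φ : ℝ) : ℝ := Real.sqrt (p ^ 2 + q ^ 2 - 2 * p * q * Real.cos φ)

lemma wsR_cont (p q : ℝ) : Continuous (wsR p q) := by
  unfold wsR; fun_prop

lemma wsR_arg_nonneg (p q φ : ℝ) : 0 ≤ p ^ 2 + q ^ 2 - 2 * p * q * Real.cos φ := by
  have := Real.sin_sq_add_cos_sq φ
  nlinarith [sq_nonneg (p - q * Real.cos φ), sq_nonneg (q * Real.sin φ)]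

lemma wsR_sq (p q φ : ℝ) : wsR p q φ ^ 2 = p ^ 2 + q ^ 2 - 2 * p * q * Real.cos φ :=
  Real.sq_sqrt (wsR_arg_nonneg p q φ)

lemma ws_rot (p q φ : ℝ) : ∃ δ : ℝ, ∀ β : ℝ,
    p * Real.sin (β + φ) - q * Real.sin β = wsR p q φ * Real.sin (δ + β) := by
  let z : ℂ := ⟨p * Real.cos φ - q, p * Real.sin φ⟩
  have hz : ‖z‖ = wsR p q φ := by
    rw [Complex.norm_eq_sqrt_sq_add_sq, wsR]
    congr 1
    have := Real.sin_sq_add_cos_sq φ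
    simp only [z]
    linear_combination p ^ 2 * this
  refine ⟨Complex.arg z, fun β => ?_⟩
  have h1 := Complex.norm_mul_cos_arg z
  have h2 := Complex.norm_mul_sin_arg z
  rw [hz] at h1 h2
  simp only [z] at h1 h2
  rw [Real.sin_add, Real.sin_add]
  linear_combination (-Real.sin β) * h1 - Real.cos β * h2

lemma ws_addition (n : ℤ) (x y : ℝ) : besselJ n x * besselJ n y =
    (1 / Real.pi) * ∫ φ in (0:ℝ)..Real.pi, Real.cos (n * φ) * besselJ 0 (wsR x y φ) := by
  have hc := wsJ_cont 0
  have hR := wsR_cont x y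
  have hper : ∀ c : ℝ, Function.Periodic
      (fun α : ℝ => Real.cos ((n * α - x * Real.sin α) - c)) (2 * Real.pi) := by
    intro c α
    simp only [Real.sin_add_two_pi]
    rw [← Real.cos_add_int_mul_two_pi (n * α - x * Real.sin α - c) n]
    congr 1
    ring
  have e1 : (2 * Real.pi * besselJ n x) * (2 * Real.pi * besselJ n y) =
      ∫ β in (0:ℝ)..2 * Real.pi, ∫ α in (0:ℝ)..2 * Real.pi,
        Real.cos ((n * α - x * Real.sin α) - (n * β - y * Real.sin β)) := by
    have : ∀ β : ℝ, ∫ α in (0:ℝ)..2 * Real.pi,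
        Real.cos ((n * α - x * Real.sin α) - (n * β - y * Real.sin β)) =
        (2 * Real.pi * besselJ n x) * Real.cos (n * β - y * Real.sin β) := by
      intro β
      simp_rw [Real.cos_sub (_ - _) (_ - _)]
      rw [intervalIntegral.integral_add (Continuous.intervalIntegrable (by fun_prop) _ _)
        (Continuous.intervalIntegrable (by fun_prop) _ _), intervalIntegral.integral_mul_const,
        intervalIntegral.integral_mul_const, wsJ_full, wsJ_full_sin, zero_mul, add_zero]
    simp_rw [this]
    rw [intervalIntegral.integral_const_mul, wsJ_full]
  have e2 : ∫ β in (0:ℝ)..2 * Real.pi, ∫ α in (0:ℝ)..2 * Real.pi,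
        Real.cos ((n * α - x * Real.sin α) - (n * β - y * Real.sin β)) =
      ∫ β in (0:ℝ)..2 * Real.pi, ∫ φ in (0:ℝ)..2 * Real.pi,
        Real.cos (n * φ - (x * Real.sin (β + φ) - y * Real.sin β)) := by
    congr 1
    funext β
    rw [← ws_shift (hper _) β]
    congr 1
    funext φ
    congr 1
    ring
  have e3 : ∀ φ : ℝ, ∫ β in (0:ℝ)..2 * Real.pi,
        Real.cos (n * φ - (x * Real.sin (β + φ) - y * Real.sin β)) =
        2 * Real.pi * (Real.cos (n * φ) * besselJ 0 (wsR x y φ)) := by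
    intro φ
    obtain ⟨δ, hδ⟩ := ws_rot x y φ
    simp_rw [hδ]
    have hp : Function.Periodic
      (fun β : ℝ => Real.cos (n * φ - wsR x y φ * Real.sin β)) (2 * Real.pi) := by
      intro β
      simp only [Real.sin_add_two_pi]
    rw [ws_shift hp δ]
    have h1 := wsJ_full 0 (wsR x y φ)
    have h2 := wsJ_full_sin 0 (wsR x y φ)
    simp only [Int.cast_zero, zero_mul, zero_sub, Real.cos_neg, Real.sin_neg,
      intervalIntegral.integral_neg, neg_eq_zero] at h1 h2
    simp_rw [Real.cos_sub]
    rw [intervalIntegral.integral_add (Continuous.intervalIntegrable (by fun_prop) _ _)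
        (Continuous.intervalIntegrable (by fun_prop) _ _), intervalIntegral.integral_const_mul,
        intervalIntegral.integral_const_mul, h1, h2]
    ring
  rw [e2, ws_swap (by unfold Function.uncurry; fun_prop)] at e1
  simp_rw [e3] at e1
  rw [intervalIntegral.integral_const_mul, ws_fold (by fun_prop)] at e1
  · have hp := Real.pi_pos
    field_simp
    have h4 : 4 * Real.pi ≠ 0 := by positivity
    apply mul_left_cancel₀ h4
    linarith
  · intro t
    have : (n:ℝ) * (2 * Real.pi - t) = n * (2 * Real.pi) - n * t := by ring
    rw [this, Real.cos_int_mul_two_pi_sub]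
    unfold wsR
    rw [Real.cos_two_pi_sub]

lemma ws_chain0 {f : ℝ → ℝ} {f' x : ℝ} (h : HasDerivAt f f' x) :
    HasDerivAt (fun y => besselJ 0 (f y)) (-besselJ 1 (f x) * f') x :=
  HasDerivAt.comp (h₂ := besselJ 0) x (wsJ0_deriv (f x)) h

lemma ws_chain1 {f : ℝ → ℝ} {f' x : ℝ} (h : HasDerivAt f f' x) :
    HasDerivAt (fun y => f y * besselJ 1 (f y)) (f x * besselJ 0 (f x) * f') x :=
  HasDerivAt.comp (h₂ := fun x => x * besselJ 1 x) x (wsxJ1_deriv (f x)) h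

lemma ws_density (Φ : ℝ → ℝ → ℝ) (hc : ∀ T, Continuous (Φ T)) (C : ℝ)
    (hb : ∀ T, 0 < T → ∀ φ ∈ Set.Ioc 0 Real.pi, Φ T φ ^ 2 * φ ≤ C)
    (hq : ∀ Q : Polynomial ℝ, Tendsto
      (fun T => ∫ φ in (0:ℝ)..Real.pi, Real.sin φ * Q.eval φ * Φ T φ) atTop (𝓝 0))
    (h : ℝ → ℝ) (hh : Continuous h) :
    Tendsto (fun T => ∫ φ in (0:ℝ)..Real.pi, h φ * Φ T φ) atTop (𝓝 0) := by
  have hpi := Real.pi_pos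
  set w : ℝ → ℝ := fun φ => φ ^ (-(1/2) : ℝ) with hw
  have hwi : IntervalIntegrable w volume 0 Real.pi :=
    intervalIntegral.intervalIntegrable_rpow' (by norm_num)
  have hw0 : ∀ φ ∈ Set.Ioc 0 Real.pi, 0 ≤ w φ := fun φ hφ => Real.rpow_nonneg hφ.1.le _
  set D := Real.sqrt C with hD
  have hD0 : 0 ≤ D := Real.sqrt_nonneg _
  have hΦ : ∀ T, 0 < T → ∀ φ ∈ Set.Ioc 0 Real.pi, |Φ T φ| ≤ D * w φ := by
    intro T hT φ hφ
    have h1 := hb T hT φ hφ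
    have hs : 0 < Real.sqrt φ := Real.sqrt_pos.2 hφ.1
    have : w φ = (Real.sqrt φ)⁻¹ := by
      rw [hw]; simp only
      rw [Real.rpow_neg hφ.1.le, Real.sqrt_eq_rpow]
    rw [this, ← div_eq_mul_inv, le_div_iff₀ hs, hD]
    apply Real.le_sqrt_of_sq_le
    rw [mul_pow, sq_abs, Real.sq_sqrt hφ.1.le]
    exact h1
  set W := ∫ φ in (0:ℝ)..Real.pi, w φ with hWdef
  have hW0 : 0 ≤ W := intervalIntegral.integral_nonneg hpi.le
    (fun φ hφ => Real.rpow_nonneg hφ.1 _)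
  -- the cutoff error tends to zero
  have hcut : Tendsto (fun n : ℕ => ∫ φ in (0:ℝ)..Real.pi,
      (|h φ| / (1 + n * Real.sin φ ^ 2)) * w φ) atTop (𝓝 (∫ φ in (0:ℝ)..Real.pi, (0:ℝ))) := by
    apply intervalIntegral.tendsto_integral_filter_of_dominated_convergence
      (fun φ => |h φ| * w φ)
    · refine Filter.Eventually.of_forall fun n => ?_
      refine AEStronglyMeasurable.mul (Continuous.aestronglyMeasurable ?_) ?_
      · refine hh.abs.div (by fun_prop) (fun φ => ?_)
        positivity
      · rw [Set.uIoc_of_le hpi.le]; exact hwi.1.aestronglyMeasurable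
    · refine Filter.Eventually.of_forall fun n => Filter.Eventually.of_forall fun φ hφ => ?_
      rw [Set.uIoc_of_le hpi.le] at hφ
      have h0 := hw0 φ hφ
      rw [Real.norm_eq_abs, abs_of_nonneg (by positivity)]
      refine mul_le_mul_of_nonneg_right ?_ h0
      apply div_le_self (abs_nonneg _)
      have : 0 ≤ (n:ℝ) * Real.sin φ ^ 2 := by positivity
      linarith
    · exact hwi.continuousOn_mul hh.abs.continuousOn
    · have hne : ∀ᵐ φ : ℝ, φ ≠ Real.pi := by
        simp [ae_iff, measure_singleton]
      filter_upwards [hne] with φ hφ hφ2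
      rw [Set.uIoc_of_le hpi.le] at hφ2
      have hs : 0 < Real.sin φ := Real.sin_pos_of_pos_of_lt_pi hφ2.1 (lt_of_le_of_ne hφ2.2 hφ)
      have h1 : Tendsto (fun n : ℕ => 1 + (n:ℝ) * Real.sin φ ^ 2) atTop atTop :=
        tendsto_atTop_add_const_left _ _
          (tendsto_natCast_atTop_atTop.atTop_mul_const (by positivity))
      have h2 := (h1.const_div_atTop (|h φ|)).mul_const (w φ)
      simpa using h2
  rw [intervalIntegral.integral_zero] at hcut
  rw [Metric.tendsto_atTop]
  intro ε hε
  have hε1 : 0 < ε / (4 * (D + 1)) := by positivity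
  have hε2 : 0 < ε / (4 * (D + 1) * (W + 1)) := by positivity
  obtain ⟨n, hn⟩ := (hcut.eventually (gt_mem_nhds hε1)).exists
  set ε₂ := ε / (4 * (D + 1) * (W + 1)) with hε2def
  have hden : ∀ φ : ℝ, 0 < 1 + (n:ℝ) * Real.sin φ ^ 2 := fun φ => by positivity
  obtain ⟨Q, hQ⟩ := exists_polynomial_near_of_continuousOn 0 Real.pi
    (fun φ => h φ * (n * Real.sin φ) / (1 + n * Real.sin φ ^ 2))
    (Continuous.continuousOn (by
      refine Continuous.div (by fun_prop) (by fun_prop) (fun φ => (hden φ).ne'))) ε₂ hε2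
  obtain ⟨T₀, hT₀⟩ := (Metric.tendsto_atTop.1 (hq Q)) (ε / 2) (by positivity)
  refine ⟨max T₀ 1, fun T hT => ?_⟩
  have hT1 : 0 < T := lt_of_lt_of_le one_pos ((le_max_right _ _).trans hT)
  have hA := hT₀ T ((le_max_left _ _).trans hT)
  rw [Real.dist_eq, sub_zero] at hA ⊢
  have hcT := hc T
  have hQc : Continuous (fun φ => Q.eval φ) := Q.continuous
  have hsplit : ∫ φ in (0:ℝ)..Real.pi, h φ * Φ T φ =
      (∫ φ in (0:ℝ)..Real.pi, Real.sin φ * Q.eval φ * Φ T φ) +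
      ∫ φ in (0:ℝ)..Real.pi, (h φ - Real.sin φ * Q.eval φ) * Φ T φ := by
    rw [← intervalIntegral.integral_add (Continuous.intervalIntegrable (by fun_prop) _ _)
      (Continuous.intervalIntegrable (by fun_prop) _ _)]
    congr 1
    funext φ
    ring
  have hi1 : IntervalIntegrable (fun φ => (|h φ| / (1 + n * Real.sin φ ^ 2)) * w φ)
      volume 0 Real.pi := by
    apply hwi.continuousOn_mul
    exact (hh.abs.div (by fun_prop) (fun φ => (hden φ).ne')).continuousOn
  have hB : ‖∫ φ in (0:ℝ)..Real.pi, (h φ - Real.sin φ * Q.eval φ) * Φ T φ‖ ≤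
      ∫ φ in (0:ℝ)..Real.pi, (D * ((|h φ| / (1 + n * Real.sin φ ^ 2)) * w φ) + D * (ε₂ * w φ)) := by
    apply intervalIntegral.norm_integral_le_of_norm_le hpi.le
    · refine Filter.Eventually.of_forall fun φ hφ => ?_
      have h1 := hΦ T hT1 φ hφ
      have h2 := hQ φ ⟨hφ.1.le, hφ.2⟩
      have h3 : h φ - Real.sin φ * Q.eval φ = h φ / (1 + n * Real.sin φ ^ 2) -
        Real.sin φ * (Q.eval φ - h φ * (n * Real.sin φ) / (1 + n * Real.sin φ ^ 2)) := by
        have := (hden φ).ne'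
        field_simp
        ring
      have h4 : |h φ - Real.sin φ * Q.eval φ| ≤ |h φ| / (1 + n * Real.sin φ ^ 2) + ε₂ := by
        rw [h3]
        refine (abs_sub _ _).trans ?_
        rw [abs_div, abs_of_pos (hden φ), abs_mul]
        have := Real.abs_sin_le_one φ
        have h5 := mul_le_mul this h2.le (abs_nonneg _) zero_le_one
        linarith
      rw [norm_mul, Real.norm_eq_abs, Real.norm_eq_abs]
      have h6 := mul_le_mul h4 h1 (abs_nonneg _) ((abs_nonneg _).trans h4)
      refine h6.trans (le_of_eq ?_)
      ring
    · exact (hi1.const_mul D).add ((hwi.const_mul ε₂).const_mul D)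
  rw [intervalIntegral.integral_add (hi1.const_mul D) ((hwi.const_mul ε₂).const_mul D),
    intervalIntegral.integral_const_mul, intervalIntegral.integral_const_mul,
    intervalIntegral.integral_const_mul, ← hWdef, Real.norm_eq_abs] at hB
  have hC1 : D * (ε / (4 * (D + 1))) ≤ ε / 4 := by
    rw [mul_div_assoc', div_le_div_iff₀ (by positivity) (by positivity)]
    nlinarith
  have hC2 : D * (ε₂ * W) ≤ ε / 4 := by
    rw [hε2def, div_mul_eq_mul_div, mul_div_assoc',
      div_le_div_iff₀ (by positivity) (by positivity)]
    have : 0 ≤ ε * (D + W + 1) := by positivity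
    nlinarith
  have hC3 := mul_le_mul_of_nonneg_left hn.le hD0
  rw [hsplit]
  refine (abs_add_le _ _).trans_lt ?_
  linarith

lemma ws_sqrt_tendsto {f : ℝ → ℝ} {C : ℝ} (h : ∀ T, 0 < T → |T * f T| ≤ C) :
    Tendsto (fun T => Real.sqrt T * f T) atTop (𝓝 0) := by
  have h1 : Tendsto (fun T => C / Real.sqrt T) atTop (𝓝 0) :=
    Real.tendsto_sqrt_atTop.const_div_atTop C
  refine squeeze_zero_norm' ?_ h1
  filter_upwards [eventually_gt_atTop 0] with T hT
  have hs := Real.sqrt_pos.2 hT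
  rw [le_div_iff₀ hs, Real.norm_eq_abs, ← abs_of_pos hs, ← abs_mul, abs_of_pos hs]
  have := h T hT
  rwa [mul_right_comm, Real.mul_self_sqrt hT.le]

lemma ws_bdd {f : ℝ → ℝ} (hf : Continuous f) : ∃ M, 0 ≤ M ∧
    ∀ φ ∈ Set.Icc 0 Real.pi, |f φ| ≤ M := by
  obtain ⟨M, hM⟩ := (isCompact_Icc (a := (0:ℝ)) (b := Real.pi)).exists_bound_of_continuousOn
    hf.continuousOn
  exact ⟨M, (norm_nonneg _).trans (hM 0 ⟨le_rfl, Real.pi_pos.le⟩), hM⟩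

lemma ws_int_bd {f : ℝ → ℝ} {M : ℝ} (h : ∀ φ ∈ Set.Icc 0 Real.pi, |f φ| ≤ M) :
    |∫ φ in (0:ℝ)..Real.pi, f φ| ≤ M * Real.pi := by
  have := intervalIntegral.norm_integral_le_of_norm_le_const (a := 0) (b := Real.pi) (f := f)
    (C := M) (by
      intro φ hφ
      rw [Set.uIoc_of_le Real.pi_pos.le] at hφ
      exact h φ ⟨hφ.1.le, hφ.2⟩)
  rwa [sub_zero, abs_of_pos Real.pi_pos] at this

lemma wsR_nonneg (p q φ : ℝ) : 0 ≤ wsR p q φ := Real.sqrt_nonneg _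

lemma wsR_pos {p q φ : ℝ} (hp : 0 < p) (hq : 0 < q) (hφ : φ ∈ Set.Ioo 0 Real.pi) :
    0 < wsR p q φ := by
  apply Real.sqrt_pos.2
  have h1 : Real.cos φ < 1 := by
    have := Real.cos_lt_cos_of_nonneg_of_le_pi le_rfl hφ.2.le hφ.1
    rwa [Real.cos_zero] at this
  nlinarith [sq_nonneg (p - q), mul_pos hp hq]

lemma wsR_deriv {p q φ : ℝ} (hp : 0 < p) (hq : 0 < q) (hφ : φ ∈ Set.Ioo 0 Real.pi) :
    HasDerivAt (wsR p q) (p * q * Real.sin φ / wsR p q φ) φ := by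
  have hR := wsR_pos hp hq hφ
  have h1 : HasDerivAt (fun φ => p ^ 2 + q ^ 2 - 2 * p * q * Real.cos φ)
      (2 * p * q * Real.sin φ) φ := by
    refine (((Real.hasDerivAt_cos φ).const_mul (2 * p * q)).const_sub (p ^ 2 + q ^ 2)).congr_deriv ?_
    ring
  have h2 := h1.sqrt (Real.sqrt_pos.1 hR).ne'
  refine h2.congr_deriv ?_
  unfold wsR
  unfold wsR at hR
  field_simp

lemma wsR_lower {p q φ : ℝ} (hp : 0 < p) (hq : 0 < q) (hφ : φ ∈ Set.Icc 0 Real.pi) :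
    2 * Real.sqrt (p * q) / Real.pi * φ ≤ wsR p q φ := by
  have hpi := Real.pi_pos
  have h1 := Real.mul_le_sin (x := φ / 2) (by linarith [hφ.1]) (by linarith [hφ.2])
  have h2 : Real.cos φ = 1 - 2 * Real.sin (φ / 2) ^ 2 := by
    have := Real.cos_two_mul (φ / 2)
    rw [show 2 * (φ / 2) = φ by ring] at this
    have h3 := Real.sin_sq_add_cos_sq (φ / 2)
    linarith
  apply Real.le_sqrt_of_sq_le
  have h0 : 0 ≤ φ / Real.pi := div_nonneg hφ.1 hpi.le
  have h1' : φ / Real.pi ≤ Real.sin (φ / 2) := by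
    refine le_trans (le_of_eq ?_) h1
    field_simp
  have h4 := pow_le_pow_left₀ h0 h1' 2
  have h5 : (2 * Real.sqrt (p * q) / Real.pi * φ) ^ 2 = 4 * (p * q) * (φ / Real.pi) ^ 2 := by
    rw [mul_pow, div_pow, mul_pow, Real.sq_sqrt (by positivity)]
    field_simp
    ring
  rw [h5, h2]
  nlinarith [mul_le_mul_of_nonneg_left h4 (mul_pos hp hq).le, sq_nonneg (p - q)]

lemma ws_ibp1 {p q : ℝ} (hp : 0 < p) (hq : 0 < q) (Q : Polynomial ℝ) (T : ℝ) :
    T * (p * q * T * ∫ φ in (0:ℝ)..Real.pi, Real.sin φ * Q.eval φ * besselJ 0 (wsR p q φ * T)) =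
    T * (Q.eval Real.pi * (wsR p q Real.pi * besselJ 1 (wsR p q Real.pi * T))
      - Q.eval 0 * (wsR p q 0 * besselJ 1 (wsR p q 0 * T))
      - ∫ φ in (0:ℝ)..Real.pi,
        Q.derivative.eval φ * (wsR p q φ * besselJ 1 (wsR p q φ * T))) := by
  have hc0 := wsJ_cont 0
  have hc1 := wsJ_cont 1
  have hR := wsR_cont p q
  have hQc : Continuous (fun φ => Q.eval φ) := Q.continuous
  have hQc' : Continuous (fun φ => Q.derivative.eval φ) := Q.derivative.continuous
  have h := intervalIntegral.integral_eq_sub_of_hasDerivAt_of_le (a := 0) (b := Real.pi)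
    (f := fun φ => Q.eval φ * ((wsR p q φ * T) * besselJ 1 (wsR p q φ * T)))
    (f' := fun φ => T * (Q.derivative.eval φ * (wsR p q φ * besselJ 1 (wsR p q φ * T))) +
      T * (p * q * T) * (Real.sin φ * Q.eval φ * besselJ 0 (wsR p q φ * T)))
    Real.pi_pos.le (Continuous.continuousOn (by fun_prop)) (by
      intro φ hφ
      have hRp := wsR_pos hp hq hφ
      have e1 := ws_chain1 ((wsR_deriv hp hq hφ).mul_const T)
      refine ((Q.hasDerivAt φ).mul e1).congr_deriv ?_
      field_simp) (Continuous.intervalIntegrable (by fun_prop) _ _)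
  rw [intervalIntegral.integral_add (Continuous.intervalIntegrable (by fun_prop) _ _)
    (Continuous.intervalIntegrable (by fun_prop) _ _), intervalIntegral.integral_const_mul,
    intervalIntegral.integral_const_mul] at h
  linear_combination h

lemma ws_ibp2 {p q : ℝ} (hp : 0 < p) (hq : 0 < q) (Q : Polynomial ℝ) (T : ℝ) :
    (p * q * T * ∫ φ in (0:ℝ)..Real.pi,
      Real.sin φ * Q.eval φ * (wsR p q φ * besselJ 1 (wsR p q φ * T))) =
    (∫ φ in (0:ℝ)..Real.pi, (Q.derivative.eval φ * wsR p q φ ^ 2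
        + 2 * p * q * Real.sin φ * Q.eval φ) * besselJ 0 (wsR p q φ * T))
      - (Q.eval Real.pi * wsR p q Real.pi ^ 2 * besselJ 0 (wsR p q Real.pi * T)
      - Q.eval 0 * wsR p q 0 ^ 2 * besselJ 0 (wsR p q 0 * T)) := by
  have hc0 := wsJ_cont 0
  have hc1 := wsJ_cont 1
  have hR := wsR_cont p q
  have hQc : Continuous (fun φ => Q.eval φ) := Q.continuous
  have hQc' : Continuous (fun φ => Q.derivative.eval φ) := Q.derivative.continuous
  have h := intervalIntegral.integral_eq_sub_of_hasDerivAt_of_le (a := 0) (b := Real.pi)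
    (f := fun φ => Q.eval φ * wsR p q φ ^ 2 * besselJ 0 (wsR p q φ * T))
    (f' := fun φ => (Q.derivative.eval φ * wsR p q φ ^ 2
        + 2 * p * q * Real.sin φ * Q.eval φ) * besselJ 0 (wsR p q φ * T) -
      (p * q * T) * (Real.sin φ * Q.eval φ * (wsR p q φ * besselJ 1 (wsR p q φ * T))))
    Real.pi_pos.le (Continuous.continuousOn (by fun_prop)) (by
      intro φ hφ
      have hRp := wsR_pos hp hq hφ
      have e0 := wsR_deriv hp hq hφ
      have e1 := ws_chain0 (e0.mul_const T)
      refine (((Q.hasDerivAt φ).mul (e0.pow 2)).mul e1).congr_deriv ?_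
      simp
      field_simp
      ring) (Continuous.intervalIntegrable (by fun_prop) _ _)
  rw [intervalIntegral.integral_sub (Continuous.intervalIntegrable (by fun_prop) _ _)
    (Continuous.intervalIntegrable (by fun_prop) _ _), intervalIntegral.integral_const_mul] at h
  linear_combination -h

lemma ws_A {p q : ℝ} (hp : 0 < p) (hq : 0 < q) (h : ℝ → ℝ) (hh : Continuous h) :
    Tendsto (fun T => ∫ φ in (0:ℝ)..Real.pi, h φ * (Real.sqrt T * besselJ 0 (wsR p q φ * T)))
      atTop (𝓝 0) := by
  have hc0 := wsJ_cont 0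
  have hR := wsR_cont p q
  have hpi := Real.pi_pos
  have hpq : 0 < Real.sqrt (p * q) := Real.sqrt_pos.2 (mul_pos hp hq)
  set c := 2 * Real.sqrt (p * q) / Real.pi with hcdef
  have hcpos : 0 < c := by positivity
  refine ws_density (fun T φ => Real.sqrt T * besselJ 0 (wsR p q φ * T)) (by intro T; fun_prop)
    (5 / c) ?_ ?_ h hh
  · intro T hT φ hφ
    have h1 := wsR_lower hp hq ⟨hφ.1.le, hφ.2⟩
    have h2 := wsJ_energy (mul_nonneg (wsR_nonneg p q φ) hT.le)
    rw [mul_pow, Real.sq_sqrt hT.le, le_div_iff₀ hcpos]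
    have h3 : 0 ≤ T * besselJ 0 (wsR p q φ * T) ^ 2 := by positivity
    have h4 := mul_le_mul_of_nonneg_left h1 h3
    have h5 : 0 ≤ (wsR p q φ * T) * besselJ 1 (wsR p q φ * T) ^ 2 :=
      mul_nonneg (mul_nonneg (wsR_nonneg p q φ) hT.le) (sq_nonneg _)
    rw [← hcdef] at h4
    nlinarith
  · intro Q
    obtain ⟨M, hM0, hM⟩ := ws_bdd (f := fun φ => Q.derivative.eval φ * wsR p q φ)
      (Q.derivative.continuous.mul hR)
    have key : ∀ T, 0 < T → |T * ∫ φ in (0:ℝ)..Real.pi,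
        Real.sin φ * Q.eval φ * besselJ 0 (wsR p q φ * T)| ≤
        (|Q.eval Real.pi * wsR p q Real.pi| + |Q.eval 0 * wsR p q 0| + M * Real.pi) / (p * q) := by
      intro T hT
      have h1 := mul_left_cancel₀ hT.ne' (ws_ibp1 hp hq Q T)
      rw [le_div_iff₀ (mul_pos hp hq), ← abs_of_pos (mul_pos hp hq), ← abs_mul]
      rw [mul_comm, ← mul_assoc, h1]
      have h2 : |∫ φ in (0:ℝ)..Real.pi,
        Q.derivative.eval φ * (wsR p q φ * besselJ 1 (wsR p q φ * T))| ≤ M * Real.pi := by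
        apply ws_int_bd
        intro φ hφ
        rw [← mul_assoc, abs_mul]
        have := mul_le_mul (hM φ hφ) (wsJ_abs_le 1 (wsR p q φ * T)) (abs_nonneg _) hM0
        linarith
      have h3 : ∀ x y : ℝ, |x * besselJ 1 y| ≤ |x| := fun x y => by
        rw [abs_mul]
        exact mul_le_of_le_one_right (abs_nonneg _) (wsJ_abs_le 1 y)
      rw [← mul_assoc, ← mul_assoc]
      refine (abs_sub _ _).trans (add_le_add ?_ h2)
      exact (abs_sub _ _).trans (add_le_add (h3 _ _) (h3 _ _))
    have := ws_sqrt_tendsto key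
    refine this.congr fun T => ?_
    rw [← intervalIntegral.integral_const_mul]
    congr 1
    funext φ
    ring

lemma ws_B {p q : ℝ} (hp : 0 < p) (hq : 0 < q) (h : ℝ → ℝ) (hh : Continuous h) :
    Tendsto (fun T => ∫ φ in (0:ℝ)..Real.pi,
      h φ * (Real.sqrt T * (wsR p q φ * besselJ 1 (wsR p q φ * T)))) atTop (𝓝 0) := by
  have hc0 := wsJ_cont 0
  have hc1 := wsJ_cont 1
  have hR := wsR_cont p q
  have hpi := Real.pi_pos
  obtain ⟨M, hM0, hM⟩ := ws_bdd hR
  refine ws_density (fun T φ => Real.sqrt T * (wsR p q φ * besselJ 1 (wsR p q φ * T)))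
    (by intro T; fun_prop) (M * 5 * Real.pi) ?_ ?_ h hh
  · intro T hT φ hφ
    have h1 := hM φ ⟨hφ.1.le, hφ.2⟩
    rw [abs_of_nonneg (wsR_nonneg p q φ)] at h1
    have h2 := wsJ_energy (mul_nonneg (wsR_nonneg p q φ) hT.le)
    have h5 : 0 ≤ (wsR p q φ * T) * besselJ 0 (wsR p q φ * T) ^ 2 :=
      mul_nonneg (mul_nonneg (wsR_nonneg p q φ) hT.le) (sq_nonneg _)
    have h6 : (wsR p q φ * T) * besselJ 1 (wsR p q φ * T) ^ 2 ≤ 5 := by linarith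
    have h7 : 0 ≤ (wsR p q φ * T) * besselJ 1 (wsR p q φ * T) ^ 2 :=
      mul_nonneg (mul_nonneg (wsR_nonneg p q φ) hT.le) (sq_nonneg _)
    rw [mul_pow, Real.sq_sqrt hT.le]
    have e : T * (wsR p q φ * besselJ 1 (wsR p q φ * T)) ^ 2 * φ =
      wsR p q φ * ((wsR p q φ * T) * besselJ 1 (wsR p q φ * T) ^ 2) * φ := by ring
    rw [e]
    exact mul_le_mul (mul_le_mul h1 h6 h7 hM0) hφ.2 hφ.1.le (by positivity)
  · intro Q
    obtain ⟨M, hM0, hM⟩ := ws_bdd (f := fun φ => Q.derivative.eval φ * wsR p q φ ^ 2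
        + 2 * p * q * Real.sin φ * Q.eval φ)
      (by
        have hQc : Continuous (fun φ => Q.eval φ) := Q.continuous
        have hQc' : Continuous (fun φ => Q.derivative.eval φ) := Q.derivative.continuous
        fun_prop)
    have key : ∀ T, 0 < T → |T * ∫ φ in (0:ℝ)..Real.pi,
        Real.sin φ * Q.eval φ * (wsR p q φ * besselJ 1 (wsR p q φ * T))| ≤
        (M * Real.pi + (|Q.eval Real.pi * wsR p q Real.pi ^ 2| + |Q.eval 0 * wsR p q 0 ^ 2|))
          / (p * q) := by
      intro T hT
      rw [le_div_iff₀ (mul_pos hp hq), ← abs_of_pos (mul_pos hp hq), ← abs_mul]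
      rw [mul_comm, ← mul_assoc, ws_ibp2 hp hq Q T]
      have h3 : ∀ x y : ℝ, |x * besselJ 0 y| ≤ |x| := fun x y => by
        rw [abs_mul]
        exact mul_le_of_le_one_right (abs_nonneg _) (wsJ_abs_le 0 y)
      refine (abs_sub _ _).trans (add_le_add ?_ ?_)
      · exact ws_int_bd fun φ hφ => (h3 _ _).trans (hM φ hφ)
      · exact (abs_sub _ _).trans (add_le_add (h3 _ _) (h3 _ _))
    have := ws_sqrt_tendsto key
    refine this.congr fun T => ?_
    rw [← intervalIntegral.integral_const_mul]
    congr 1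
    funext φ
    ring

lemma ws_sqrtJ_bd {a : ℝ} (ha : 0 < a) {T : ℝ} (hT : 0 < T) :
    |Real.sqrt T * besselJ 0 (a * T)| ≤ Real.sqrt (5 / a) ∧
    |Real.sqrt T * besselJ 1 (a * T)| ≤ Real.sqrt (5 / a) := by
  have h := wsJ_energy (mul_pos ha hT).le
  have h0 : 0 ≤ a * T * besselJ 0 (a * T) ^ 2 := by positivity
  have h1 : 0 ≤ a * T * besselJ 1 (a * T) ^ 2 := by positivity
  constructor <;>
  · apply Real.abs_le_sqrt
    rw [mul_pow, Real.sq_sqrt hT.le, le_div_iff₀ ha]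
    linarith

lemma ws_null {p q a : ℝ} (hp : 0 < p) (hq : 0 < q) (ha : 0 < a) (h : ℝ → ℝ) (hh : Continuous h) :
    Tendsto (fun T => ∫ φ in (0:ℝ)..Real.pi, h φ * (T * (wsR p q φ * besselJ 1 (wsR p q φ * T) *
      besselJ 0 (a * T) - a * besselJ 0 (wsR p q φ * T) * besselJ 1 (a * T)))) atTop (𝓝 0) := by
  have hc0 := wsJ_cont 0
  have hc1 := wsJ_cont 1
  have hR := wsR_cont p q
  have hA := ws_A hp hq h hh
  have hB := ws_B hp hq h hh
  have bd : ∀ i : Fin 2, Filter.IsBoundedUnder (· ≤ ·) atTop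
      (norm ∘ fun T => Real.sqrt T * besselJ (if i = 0 then 0 else 1) (a * T)) := by
    intro i
    refine Filter.isBoundedUnder_of_eventually_le (a := Real.sqrt (5 / a)) ?_
    filter_upwards [eventually_gt_atTop 0] with T hT
    have := ws_sqrtJ_bd ha hT
    simp only [Function.comp, Real.norm_eq_abs]
    split_ifs
    · exact this.1
    · exact this.2
  have t1 := hB.zero_mul_isBoundedUnder_le (bd 0)
  have t2 := hA.zero_mul_isBoundedUnder_le (bd 1)
  have t := t1.sub (t2.const_mul a)
  rw [mul_zero, sub_zero] at t
  refine t.congr' ?_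
  filter_upwards [eventually_gt_atTop 0] with T hT
  simp only [if_true, one_ne_zero, if_false]
  rw [← intervalIntegral.integral_mul_const, ← intervalIntegral.integral_mul_const,
    ← intervalIntegral.integral_const_mul,
    ← intervalIntegral.integral_sub (Continuous.intervalIntegrable (by fun_prop) _ _)
      (Continuous.intervalIntegrable (by fun_prop) _ _)]
  congr 1
  funext φ
  have hs := Real.mul_self_sqrt hT.le
  linear_combination (h φ * (wsR p q φ * besselJ 1 (wsR p q φ * T) *
      besselJ 0 (a * T) - a * besselJ 0 (wsR p q φ * T) * besselJ 1 (a * T))) * hs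

lemma ws_lommel (a b T : ℝ) :
    (b ^ 2 - a ^ 2) * ∫ l in (0:ℝ)..T, besselJ 0 (a * l) * l * besselJ 0 (b * l) =
    T * (b * besselJ 1 (b * T) * besselJ 0 (a * T) - a * besselJ 0 (b * T) * besselJ 1 (a * T)) := by
  have hc0 := wsJ_cont 0
  rw [← intervalIntegral.integral_const_mul, intervalIntegral.integral_eq_sub_of_hasDerivAt
    (f := fun T => (b * T * besselJ 1 (b * T)) * besselJ 0 (a * T) -
      (a * T * besselJ 1 (a * T)) * besselJ 0 (b * T))]
  · ring
  · intro x _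
    have ea : HasDerivAt (fun x => a * x) a x := by simpa using (hasDerivAt_id x).const_mul a
    have eb : HasDerivAt (fun x => b * x) b x := by simpa using (hasDerivAt_id x).const_mul b
    refine (((ws_chain1 eb).mul (ws_chain0 ea)).sub
      ((ws_chain1 ea).mul (ws_chain0 eb))).congr_deriv ?_
    ring
  · exact Continuous.intervalIntegrable (by fun_prop) _ _

lemma ws_kernel {p q a : ℝ} (hp : 0 < p) (hq : 0 < q) (ha : 0 < a) (g h : ℝ → ℝ)
    (hg : Continuous g) (hh : Continuous h)
    (hgh : ∀ φ ∈ Set.Icc 0 Real.pi, g φ = h φ * (wsR p q φ ^ 2 - a ^ 2)) :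
    Tendsto (fun T => ∫ l in (0:ℝ)..T, besselJ 0 (a * l) * l *
      ∫ φ in (0:ℝ)..Real.pi, g φ * besselJ 0 (wsR p q φ * l)) atTop (𝓝 0) := by
  have hc0 := wsJ_cont 0
  have hR := wsR_cont p q
  refine (ws_null hp hq ha h hh).congr fun T => ?_
  simp_rw [← intervalIntegral.integral_const_mul]
  rw [ws_swap (by unfold Function.uncurry; fun_prop)]
  apply intervalIntegral.integral_congr
  intro φ hφ
  rw [Set.uIcc_of_le Real.pi_pos.le] at hφ
  simp only
  rw [← ws_lommel, ← mul_assoc, ← hgh φ hφ, ← intervalIntegral.integral_const_mul]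
  congr 1
  funext l
  ring

lemma wsJ1_zero : besselJ 1 0 = 0 := by
  rw [wsJ1_eq2, zero_mul]

lemma wsJ0_zero : besselJ 0 0 = 1 := by
  rw [wsJ0_eq]
  simp [Real.pi_ne_zero]

lemma ws_sin {p q : ℝ} (hp : 0 < p) (hq : 0 < q) (l : ℝ) :
    l * ∫ φ in (0:ℝ)..Real.pi, Real.sin φ * besselJ 0 (wsR p q φ * l) =
    ((p + q) * besselJ 1 ((p + q) * l) - |p - q| * besselJ 1 (|p - q| * l)) / (p * q) := by
  have e1 : wsR p q Real.pi = p + q := by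
    unfold wsR
    rw [Real.cos_pi, show p ^ 2 + q ^ 2 - 2 * p * q * -1 = (p + q) ^ 2 by ring]
    exact Real.sqrt_sq (by positivity)
  have e2 : wsR p q 0 = |p - q| := by
    unfold wsR
    rw [Real.cos_zero, show p ^ 2 + q ^ 2 - 2 * p * q * 1 = (p - q) ^ 2 by ring]
    exact Real.sqrt_sq_eq_abs _
  rcases eq_or_ne l 0 with rfl | hl
  · simp [wsJ1_zero]
  · have h := mul_left_cancel₀ hl (ws_ibp1 hp hq 1 l)
    simp only [Polynomial.eval_one, mul_one, one_mul, Polynomial.derivative_one,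
      Polynomial.eval_zero, zero_mul, intervalIntegral.integral_zero, sub_zero, e1, e2] at h
    rw [← h]
    field_simp

lemma ws_sin_int {p q : ℝ} (hp : 0 < p) (hq : 0 < q) (a T : ℝ) :
    ∫ l in (0:ℝ)..T, besselJ 0 (a * l) * l *
      ∫ φ in (0:ℝ)..Real.pi, Real.sin φ * besselJ 0 (wsR p q φ * l) =
    (1 / (p * q)) * ((∫ l in (0:ℝ)..T, besselJ 0 (a * l) * ((p + q) * besselJ 1 ((p + q) * l))) -
      ∫ l in (0:ℝ)..T, besselJ 0 (a * l) * (|p - q| * besselJ 1 (|p - q| * l))) := by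
  have hc0 := wsJ_cont 0
  have hc1 := wsJ_cont 1
  rw [← intervalIntegral.integral_sub (Continuous.intervalIntegrable (by fun_prop) _ _)
      (Continuous.intervalIntegrable (by fun_prop) _ _), ← intervalIntegral.integral_const_mul]
  congr 1
  funext l
  rw [mul_assoc, ws_sin hp hq]
  ring

lemma ws_weber0 {a b : ℝ} (hb : 0 ≤ b) (hab : b < a) :
    Tendsto (fun T => ∫ l in (0:ℝ)..T, besselJ 0 (a * l) * (b * besselJ 1 (b * l)))
      atTop (𝓝 0) := by
  rcases hb.eq_or_lt with rfl | hb
  · simp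
  have hp : 0 < b / 2 := by positivity
  have hR := wsR_cont (b / 2) (b / 2)
  have hne : ∀ φ, wsR (b / 2) (b / 2) φ ^ 2 - a ^ 2 ≠ 0 := by
    intro φ
    rw [wsR_sq]
    have := Real.neg_one_le_cos φ
    have h2 : b ^ 2 < a ^ 2 := by nlinarith
    apply ne_of_lt
    nlinarith [mul_pos hb hb]
  have h := ws_kernel hp hp (hb.trans hab) Real.sin
    (fun φ => Real.sin φ / (wsR (b / 2) (b / 2) φ ^ 2 - a ^ 2)) Real.continuous_sin
    (Real.continuous_sin.div (by fun_prop) hne) (by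
      intro φ _
      rw [div_mul_cancel₀ _ (hne φ)])
  simp_rw [ws_sin_int hp hp] at h
  simp only [sub_self, abs_zero, zero_mul, mul_zero, intervalIntegral.integral_zero, sub_zero,
    add_halves] at h
  have h2 := h.const_mul (b / 2 * (b / 2))
  rw [mul_zero] at h2
  refine h2.congr fun T => ?_
  field_simp

lemma ws_weber1 {a b : ℝ} (ha : 0 < a) (hab : a < b) :
    Tendsto (fun T => ∫ l in (0:ℝ)..T, besselJ 0 (a * l) * (b * besselJ 1 (b * l)))
      atTop (𝓝 1) := by
  have hc0 := wsJ_cont 0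
  have hc1 := wsJ_cont 1
  have key : ∀ T : ℝ, ∫ l in (0:ℝ)..T, besselJ 0 (a * l) * (b * besselJ 1 (b * l)) =
      1 - besselJ 0 (a * T) * besselJ 0 (b * T) -
        ∫ l in (0:ℝ)..T, besselJ 0 (b * l) * (a * besselJ 1 (a * l)) := by
    intro T
    rw [eq_sub_iff_add_eq, ← intervalIntegral.integral_add
      (Continuous.intervalIntegrable (by fun_prop) _ _)
      (Continuous.intervalIntegrable (by fun_prop) _ _),
      intervalIntegral.integral_eq_sub_of_hasDerivAt
        (f := fun l => -(besselJ 0 (a * l) * besselJ 0 (b * l)))]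
    · simp only [mul_zero, wsJ0_zero]
      ring
    · intro x _
      have ea : HasDerivAt (fun x => a * x) a x := by simpa using (hasDerivAt_id x).const_mul a
      have eb : HasDerivAt (fun x => b * x) b x := by simpa using (hasDerivAt_id x).const_mul b
      refine ((ws_chain0 ea).mul (ws_chain0 eb)).neg.congr_deriv ?_
      ring
    · exact Continuous.intervalIntegrable (by fun_prop) _ _
  simp_rw [key]
  have h0 := ws_weber0 ha.le hab
  have h1 : Tendsto (fun T => besselJ 0 (a * T) * besselJ 0 (b * T)) atTop (𝓝 0) := by
    have ht : Tendsto (fun T => (5 / a) / T) atTop (𝓝 0) :=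
      tendsto_id.const_div_atTop _
    have : Tendsto (fun T => besselJ 0 (a * T)) atTop (𝓝 0) := by
      have hs : Tendsto (fun T => Real.sqrt (5 / a) / Real.sqrt T) atTop (𝓝 0) :=
        Real.tendsto_sqrt_atTop.const_div_atTop _
      refine squeeze_zero_norm' ?_ hs
      filter_upwards [eventually_gt_atTop 0] with T hT
      have h2 := (ws_sqrtJ_bd ha hT).1
      have h3 := Real.sqrt_pos.2 hT
      rw [abs_mul, abs_of_pos h3] at h2
      rw [le_div_iff₀ h3, Real.norm_eq_abs]
      linarith
    refine squeeze_zero_norm (fun T => ?_) (tendsto_norm_zero.comp this)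
    simp only [Function.comp, norm_mul]
    exact mul_le_of_le_one_right (norm_nonneg _) (wsJ_abs_le 0 _)
  have := (h1.const_sub 1).sub h0
  simpa using this

lemma ws_quot (ℓ : ℤ) {γ c k : ℝ} (hγ : γ ∈ Set.Ioo 0 Real.pi) (hk : k ≠ 0)
    (hc : Real.cos (ℓ * γ) = c * Real.sin γ) : ∃ h : ℝ → ℝ, Continuous h ∧
    ∀ φ ∈ Set.Icc 0 Real.pi, Real.cos (ℓ * φ) - c * Real.sin φ =
      h φ * (k * (Real.cos γ - Real.cos φ)) := by
  set g : ℝ → ℝ := fun φ => Real.cos (ℓ * φ) - c * Real.sin φ with hg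
  have hgd : Differentiable ℝ g := by rw [hg]; fun_prop
  have hgγ : g γ = 0 := by simp only [hg]; rw [hc, sub_self]
  have hcontD : ∀ f : ℝ → ℝ, Differentiable ℝ f → Continuous (dslope f γ) := by
    intro f hf
    rw [← continuousOn_univ]
    exact (continuousOn_dslope Filter.univ_mem).2 ⟨hf.continuous.continuousOn, hf γ⟩
  have h1 := hcontD g hgd
  have h2 := hcontD Real.cos Real.differentiable_cos
  have hne : ∀ φ ∈ Set.Icc 0 Real.pi, dslope Real.cos γ φ ≠ 0 := by
    intro φ hφ
    rcases eq_or_ne φ γ with rfl | hne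
    · rw [dslope_same, Real.deriv_cos]
      exact neg_ne_zero.2 (Real.sin_pos_of_pos_of_lt_pi hγ.1 hγ.2).ne'
    · intro h0
      have := sub_smul_dslope Real.cos γ φ
      rw [h0, smul_zero] at this
      exact hne (Real.injOn_cos hφ ⟨hγ.1.le, hγ.2.le⟩ (sub_eq_zero.1 this.symm))
  have hcont : ContinuousOn (fun φ => dslope g γ φ / (-k * dslope Real.cos γ φ))
      (Set.Icc 0 Real.pi) := by
    refine h1.continuousOn.div (continuous_const.mul h2).continuousOn ?_
    intro φ hφ
    exact mul_ne_zero (neg_ne_zero.2 hk) (hne φ hφ)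
  refine ⟨Set.IccExtend Real.pi_pos.le
    ((Set.Icc 0 Real.pi).domRestrict (fun φ => dslope g γ φ / (-k * dslope Real.cos γ φ))),
    (continuousOn_iff_continuous_domRestrict.1 hcont).Icc_extend', ?_⟩
  intro φ hφ
  rw [Set.IccExtend_of_mem _ _ hφ, Set.domRestrict_apply]
  have e1 := sub_smul_dslope g γ φ
  have e2 := sub_smul_dslope Real.cos γ φ
  rw [hgγ, sub_zero, smul_eq_mul] at e1
  rw [smul_eq_mul] at e2
  change g φ = _
  rw [← neg_sub (Real.cos φ), ← e2, ← e1]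
  have := hne φ hφ
  field_simp

lemma wsR_scale (p q φ : ℝ) {l : ℝ} (hl : 0 ≤ l) : wsR (p * l) (q * l) φ = wsR p q φ * l := by
  unfold wsR
  rw [show (p * l) ^ 2 + (q * l) ^ 2 - 2 * (p * l) * (q * l) * Real.cos φ =
    (p ^ 2 + q ^ 2 - 2 * p * q * Real.cos φ) * l ^ 2 by ring,
    Real.sqrt_mul (wsR_arg_nonneg p q φ), Real.sqrt_sq hl]

theorem stmt_7 (ρ₁ ρ₂ ρ₃ γ₃ : ℝ) (ℓ : ℤ)
    (h₁ : 0 < ρ₁) (h₂ : 0 < ρ₂) (h₃ : 0 < ρ₃)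
    (htri₁ : |ρ₂ - ρ₃| < ρ₁) (htri₂ : ρ₁ < ρ₂ + ρ₃)
    (hγ₃ : γ₃ ∈ Set.Ioo 0 Real.pi)
    (hlaw : ρ₁ ^ 2 = ρ₂ ^ 2 + ρ₃ ^ 2 - 2 * ρ₂ * ρ₃ * Real.cos γ₃) :
    Tendsto
      (fun T : ℝ => ∫ lam in (0:ℝ)..T,
        besselJ 0 (ρ₁ * lam) * besselJ ℓ (ρ₂ * lam) * besselJ ℓ (ρ₃ * lam) * lam)
      atTop
      (𝓝 (Real.cos (ℓ * γ₃) / (Real.pi * ρ₂ * ρ₃ * Real.sin γ₃))) := by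
  have hc0 := wsJ_cont 0
  have hR := wsR_cont ρ₂ ρ₃
  have hs := Real.sin_pos_of_pos_of_lt_pi hγ₃.1 hγ₃.2
  have hpi := Real.pi_pos
  set c := Real.cos (ℓ * γ₃) / Real.sin γ₃ with hcdef
  obtain ⟨h, hh, hgh⟩ := ws_quot ℓ (k := 2 * ρ₂ * ρ₃) hγ₃ (by positivity)
    (show Real.cos (ℓ * γ₃) = c * Real.sin γ₃ by rw [hcdef]; field_simp)
  have t1 := ws_kernel h₂ h₃ h₁ (fun φ => Real.cos (ℓ * φ) - c * Real.sin φ) h (by fun_prop) hh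
    (by
      intro φ hφ
      rw [wsR_sq, hlaw]
      rw [hgh φ hφ]
      ring)
  have t2 := ((ws_weber1 h₁ htri₂).sub (ws_weber0 (abs_nonneg _) htri₁)).const_mul
    (1 / (ρ₂ * ρ₃))
  simp_rw [← ws_sin_int h₂ h₃] at t2
  have t := (t1.add (t2.const_mul c)).const_mul (1 / Real.pi)
  have hlim : 1 / Real.pi * (0 + c * (1 / (ρ₂ * ρ₃) * (1 - 0))) =
      Real.cos (ℓ * γ₃) / (Real.pi * ρ₂ * ρ₃ * Real.sin γ₃) := by
    rw [hcdef]
    field_simp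
    ring
  rw [hlim] at t
  refine t.congr' ?_
  filter_upwards [eventually_gt_atTop 0] with T hT
  have hparam : ∀ f : ℝ → ℝ, Continuous f → Continuous (fun l : ℝ => besselJ 0 (ρ₁ * l) * l *
      ∫ φ in (0:ℝ)..Real.pi, f φ * besselJ 0 (wsR ρ₂ ρ₃ φ * l)) := by
    intro f hf
    have : Continuous (fun l : ℝ => ∫ φ in (0:ℝ)..Real.pi, f φ * besselJ 0 (wsR ρ₂ ρ₃ φ * l)) := by
      apply intervalIntegral.continuous_parametric_intervalIntegral_of_continuous'
      unfold Function.uncurry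
      fun_prop
    fun_prop
  rw [← intervalIntegral.integral_const_mul c, ← intervalIntegral.integral_add
    ((hparam _ (by fun_prop)).intervalIntegrable _ _)
    (((hparam _ Real.continuous_sin).const_mul c).intervalIntegrable _ _),
    ← intervalIntegral.integral_const_mul]
  apply intervalIntegral.integral_congr
  intro l hl
  rw [Set.uIcc_of_le hT.le] at hl
  simp only
  have hadd := ws_addition ℓ (ρ₂ * l) (ρ₃ * l)
  simp_rw [wsR_scale ρ₂ ρ₃ _ hl.1] at hadd
  rw [mul_assoc (besselJ 0 (ρ₁ * l)) (besselJ ℓ (ρ₂ * l)), hadd]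
  have hsplit : ∫ φ in (0:ℝ)..Real.pi,
      (Real.cos (ℓ * φ) - c * Real.sin φ) * besselJ 0 (wsR ρ₂ ρ₃ φ * l) =
      (∫ φ in (0:ℝ)..Real.pi, Real.cos (ℓ * φ) * besselJ 0 (wsR ρ₂ ρ₃ φ * l)) -
      c * ∫ φ in (0:ℝ)..Real.pi, Real.sin φ * besselJ 0 (wsR ρ₂ ρ₃ φ * l) := by
    rw [← intervalIntegral.integral_const_mul, ← intervalIntegral.integral_sub
      (Continuous.intervalIntegrable (by fun_prop) _ _)
      (Continuous.intervalIntegrable (by fun_prop) _ _)]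
    congr 1
    funext φ
    ring
  rw [hsplit]
  ring
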